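/- Let m ≥ 1 be an integer, let A_0, …, A_{m−1} > 1 and c_0, …, c_{m−1} > 0 be real numbers. Set β_{−1} = 1 and β_i = A_0·A_1⋯A_i for 0 ≤ i ≤ m−1, and put d_0 = s_{β_0} and d_i = g_{β_i, β_{i−1}} for 1 ≤ i ≤ m−1. Let S_m = { x ∈ (0,1) irrational : there are infinitely many n ∈ ℕ such that c_i·A_i^n ≤ a_{n+i}(x) < 2·c_i·A_i^n for every 0 ≤ i ≤ m−1 }. Then dim_H S_m ≤ min_{0 ≤ i ≤ m−1} d_i. -/

import Mathlib

open Filter MeasureTheory Set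

/-- The Gauss map `T(x) = 1/x - ⌊1/x⌋`. -/
noncomputable def gaussMap (x : ℝ) : ℝ := 1 / x - (⌊1 / x⌋ : ℤ)

/-- The `n`-th partial quotient `a_n(x)` (for `n ≥ 1`) of the continued
fraction expansion of `x`: `a_n(x) = ⌊1 / T^{n-1}(x)⌋`. -/
noncomputable def pq (x : ℝ) (n : ℕ) : ℕ := ⌊1 / (gaussMap^[n - 1] x)⌋₊

/-- The continuant `q_n(a_1, …, a_n)`: `q_0 = 1`, `q_1 = a_1`,
`q_k = a_k q_{k-1} + q_{k-2}`. -/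
def contQ : (n : ℕ) → (Fin n → ℕ) → ℕ
  | 0, _ => 1
  | 1, a => a 0
  | (n + 2), a =>
      a (Fin.last (n + 1)) * contQ (n + 1) (Fin.init a) +
        contQ n (Fin.init (Fin.init a))

/-- `s_B`: the Wang–Wu pressure exponent. -/
noncomputable def sExp (B : ℝ) : ℝ :=
  sInf {s : ℝ | 0 ≤ s ∧
    Filter.atTop.limsup (fun n : ℕ =>
      (((n : ℝ)⁻¹ : ℝ) : EReal) * ENNReal.log (∑' a : Fin n → ℕ+,
        ENNReal.ofReal ((B ^ n * ((contQ n fun i => (a i : ℕ)) : ℝ) ^ 2) ^ (-s)))) ≤ 0}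

/-- `g_{B₁,B₂}`: the two-parameter pressure exponent. -/
noncomputable def gExp (B₁ B₂ : ℝ) : ℝ :=
  sInf {s : ℝ | 0 ≤ s ∧
    Filter.atTop.limsup (fun n : ℕ =>
      (((n : ℝ)⁻¹ : ℝ) : EReal) * ENNReal.log (∑' a : Fin n → ℕ+,
        ENNReal.ofReal (B₂ ^ ((1 - s) * (n : ℝ)) *
          (B₁ ^ n * ((contQ n fun i => (a i : ℕ)) : ℝ) ^ 2) ^ (-s)))) ≤ 0}

/-- `β_i = A_0 ⋯ A_i`. -/
noncomputable def betaProd (A : ℕ → ℝ) (i : ℕ) : ℝ := ∏ j ∈ Finset.range (i + 1), A j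

/-- The dimensional numbers `d_0 = s_{β_0}` and `d_i = g_{β_i, β_{i-1}}` for `i ≥ 1`. -/
noncomputable def dimNum (A : ℕ → ℝ) (i : ℕ) : ℝ :=
  if i = 0 then sExp (betaProd A 0) else gExp (betaProd A i) (betaProd A (i - 1))


lemma gm_eq {x : ℝ} (h : x ∈ Ioo (0:ℝ) 1) :
    x * ((pq x 1 : ℝ) + gaussMap x) = 1 := by
  have hx := h.1
  have h1 : (0:ℝ) ≤ 1 / x := by positivity
  have : ((pq x 1 : ℕ) : ℝ) = ((⌊1 / x⌋ : ℤ) : ℝ) := by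
    simp only [pq, Nat.sub_self, Function.iterate_zero, id]
    rw [natCast_floor_eq_intCast_floor h1]
  rw [this, gaussMap]
  field_simp
  ring

lemma gm_mem {x : ℝ} (_h : x ∈ Ioo (0:ℝ) 1) (hi : Irrational x) :
    gaussMap x ∈ Ioo (0:ℝ) 1 ∧ Irrational (gaussMap x) := by
  have hirr : Irrational (gaussMap x) := by
    unfold gaussMap
    rw [one_div]
    exact (hi.inv).sub_intCast _
  refine ⟨⟨?_, ?_⟩, hirr⟩
  · have : 0 ≤ gaussMap x := by
      unfold gaussMap; linarith [Int.floor_le (1/x)]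
    exact lt_of_le_of_ne this (fun h => hirr.ne_zero h.symm)
  · unfold gaussMap; linarith [Int.lt_floor_add_one (1/x)]

lemma it_mem {x : ℝ} (h : x ∈ Ioo (0:ℝ) 1) (hi : Irrational x) (k : ℕ) :
    gaussMap^[k] x ∈ Ioo (0:ℝ) 1 ∧ Irrational (gaussMap^[k] x) := by
  induction k with
  | zero => exact ⟨h, hi⟩
  | succ k ih =>
    rw [Function.iterate_succ_apply']
    exact gm_mem ih.1 ih.2

lemma it_eq {x : ℝ} (h : x ∈ Ioo (0:ℝ) 1) (hi : Irrational x) (k : ℕ) :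
    gaussMap^[k] x * ((pq x (k+1) : ℝ) + gaussMap^[k+1] x) = 1 := by
  have := gm_eq (it_mem h hi k).1
  rw [Function.iterate_succ_apply']
  exact this

lemma it_mul_pq {x : ℝ} (h : x ∈ Ioo (0:ℝ) 1) (hi : Irrational x) (k : ℕ) :
    gaussMap^[k] x * (pq x (k+1) : ℝ) ≤ 1 := by
  have := it_eq h hi k
  have h1 := (it_mem h hi k).1.1
  have h2 := (it_mem h hi (k+1)).1.1
  nlinarith [mul_pos h1 h2]

lemma pq_pos {x : ℝ} (h : x ∈ Ioo (0:ℝ) 1) (hi : Irrational x) (k : ℕ) :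
    0 < pq x (k+1) := by
  have := it_eq h hi k
  have h1 := (it_mem h hi k).1
  have h2 := (it_mem h hi (k+1)).1
  rcases Nat.eq_zero_or_pos (pq x (k+1)) with h0 | h0
  · rw [h0] at this
    simp only [Nat.cast_zero, zero_add] at this
    nlinarith [h1.1, h1.2, h2.1, h2.2]
  · exact h0

lemma contQ_rec (a : ℕ → ℕ) (n : ℕ) :
    contQ (n+2) (fun i => a i) = a (n+1) * contQ (n+1) (fun i => a i) + contQ n (fun i => a i) := by
  rw [contQ]
  rfl

lemma prod_contQ {x : ℝ} (h : x ∈ Ioo (0:ℝ) 1) (hi : Irrational x) (k : ℕ) :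
    (∏ j ∈ Finset.range (k+1), gaussMap^[j] x) *
      ((contQ (k+1) (fun i => pq x (i+1)) : ℝ) +
        gaussMap^[k+1] x * (contQ k (fun i => pq x (i+1)) : ℝ)) = 1 := by
  induction k with
  | zero =>
    have := it_eq h hi 0
    simpa [contQ] using this
  | succ k ih =>
    rw [Finset.prod_range_succ, contQ_rec (fun j => pq x (j+1))]
    have := it_eq h hi (k+1)
    push_cast
    linear_combination ih + (∏ j ∈ Finset.range (k+1), gaussMap^[j] x) * (contQ (k+1) (fun i => pq x (i+1)) : ℝ) * this

lemma prod_nonneg_it {x : ℝ} (h : x ∈ Ioo (0:ℝ) 1) (hi : Irrational x) (k : ℕ) :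
    0 < ∏ j ∈ Finset.range k, gaussMap^[j] x :=
  Finset.prod_pos fun j _ => (it_mem h hi j).1.1

lemma prod_contQ_le {x : ℝ} (h : x ∈ Ioo (0:ℝ) 1) (hi : Irrational x) (k : ℕ) :
    (∏ j ∈ Finset.range k, gaussMap^[j] x) * (contQ k (fun i => pq x (i+1)) : ℝ) ≤ 1 := by
  cases k with
  | zero => simp [contQ]
  | succ k =>
    have := prod_contQ h hi k
    have h1 := prod_nonneg_it h hi (k+1)
    have h2 := (it_mem h hi (k+1)).1.1
    have h3 : (0:ℝ) ≤ (contQ k (fun i => pq x (i+1)) : ℝ) := by positivity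
    nlinarith [mul_nonneg h1.le (mul_nonneg h2.le h3)]

lemma contQ_ge (n : ℕ) (a : ℕ → ℕ) : ∏ j ∈ Finset.range n, a j ≤ contQ n (fun i => a i) := by
  induction n with
  | zero => simp [contQ]
  | succ n ih =>
    cases n with
    | zero => simp [contQ]
    | succ n =>
      rw [contQ_rec, Finset.prod_range_succ, mul_comm]
      exact le_add_right (Nat.mul_le_mul_left _ ih)

lemma contQ_ge' (n : ℕ) (a : Fin n → ℕ) : ∏ j, a j ≤ contQ n a := by
  have := contQ_ge n (fun j => if h : j < n then a ⟨j, h⟩ else 0)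
  rw [Finset.prod_range] at this
  simpa using this

lemma dist_eq {x y : ℝ} (h : x ∈ Ioo (0:ℝ) 1) (hi : Irrational x) (h' : y ∈ Ioo (0:ℝ) 1)
    (hi' : Irrational y) (k : ℕ) (hk : ∀ j < k, pq x (j+1) = pq y (j+1)) :
    |x - y| = (∏ j ∈ Finset.range k, gaussMap^[j] x) * (∏ j ∈ Finset.range k, gaussMap^[j] y) *
      |gaussMap^[k] x - gaussMap^[k] y| := by
  induction k with
  | zero => simp
  | succ k ih =>
    rw [ih (fun j hj => hk j (by omega)), Finset.prod_range_succ, Finset.prod_range_succ]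
    have e1 := it_eq h hi k
    have e2 := it_eq h' hi' k
    rw [← hk k (by omega)] at e2
    have p1 := (it_mem h hi k).1.1
    have p2 := (it_mem h' hi' k).1.1
    have : gaussMap^[k] x - gaussMap^[k] y =
      (gaussMap^[k] x * gaussMap^[k] y) * (gaussMap^[k+1] y - gaussMap^[k+1] x) := by
      linear_combination gaussMap^[k] x * (-e2) + gaussMap^[k] y * e1
    rw [this, abs_mul, abs_of_pos (mul_pos p1 p2), abs_sub_comm (gaussMap^[k+1] y)]
    ring

lemma prod_it_le {x : ℝ} (h : x ∈ Ioo (0:ℝ) 1) (hi : Irrational x) (n i : ℕ) (L : ℕ → ℝ)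
    (hL : ∀ j < i, 0 < L j ∧ L j ≤ (pq x (n + j + 1) : ℝ)) :
    (∏ j ∈ Finset.range (n+i), gaussMap^[j] x) *
      ((contQ n (fun i => pq x (i+1)) : ℝ) * ∏ j ∈ Finset.range i, L j) ≤ 1 := by
  induction i with
  | zero => simpa using prod_contQ_le h hi n
  | succ i ih =>
    rw [← add_assoc, Finset.prod_range_succ, Finset.prod_range_succ]
    have ih := ih (fun j hj => hL j (by omega))
    have p1 := (it_mem h hi (n+i)).1.1
    obtain ⟨l1, l2⟩ := hL i (by omega)
    have e := it_mul_pq h hi (n+i)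
    have e' : gaussMap^[n+i] x * L i ≤ 1 := le_trans (by gcongr) e
    have e0 : 0 ≤ gaussMap^[n+i] x * L i := by positivity
    have p0 : 0 ≤ (∏ j ∈ Finset.range (n+i), gaussMap^[j] x) *
      ((contQ n (fun i => pq x (i+1)) : ℝ) * ∏ j ∈ Finset.range i, L j) := by
      have := prod_nonneg_it h hi (n+i)
      have : 0 ≤ ∏ j ∈ Finset.range i, L j :=
        Finset.prod_nonneg fun j hj => (hL j (by have := Finset.mem_range.1 hj; omega)).1.le
      positivity
    calc _ = ((∏ j ∈ Finset.range (n+i), gaussMap^[j] x) *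
      ((contQ n (fun i => pq x (i+1)) : ℝ) * ∏ j ∈ Finset.range i, L j)) * (gaussMap^[n+i] x * L i) := by ring
      _ ≤ 1 := mul_le_one₀ ih e0 e'

lemma dist_bound {x y : ℝ} (h : x ∈ Ioo (0:ℝ) 1) (hi : Irrational x) (h' : y ∈ Ioo (0:ℝ) 1)
    (hi' : Irrational y) (n i : ℕ) (L : ℕ → ℝ) (hq : ∀ j < n + i, pq x (j+1) = pq y (j+1))
    (hL : ∀ j < i + 1, 0 < L j ∧ L j ≤ (pq x (n + j + 1) : ℝ) ∧ L j ≤ (pq y (n + j + 1) : ℝ)) :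
    |x - y| * (((contQ n (fun i => pq x (i+1)) : ℝ) * ∏ j ∈ Finset.range i, L j) ^ 2 * L i) ≤ 1 := by
  have b1 := prod_it_le h hi n i L (fun j hj => ⟨(hL j (by omega)).1, (hL j (by omega)).2.1⟩)
  have b2 := prod_it_le h' hi' n i L (fun j hj => ⟨(hL j (by omega)).1, (hL j (by omega)).2.2⟩)
  have hc : contQ n (fun i => pq y (i+1)) = contQ n (fun i => pq x (i+1)) := by
    congr 1; funext j; exact (hq j (by omega)).symm
  rw [hc] at b2
  obtain ⟨l0, l1, l2⟩ := hL i (by omega)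
  have e1 : gaussMap^[n+i] x * L i ≤ 1 := by
    have := (it_mem h hi (n+i)).1.1
    exact le_trans (by gcongr) (it_mul_pq h hi (n+i))
  have e2 : gaussMap^[n+i] y * L i ≤ 1 := by
    have := (it_mem h' hi' (n+i)).1.1
    exact le_trans (by gcongr) (it_mul_pq h' hi' (n+i))
  have e3 : |gaussMap^[n+i] x - gaussMap^[n+i] y| * L i ≤ 1 := by
    have := (it_mem h hi (n+i)).1.1
    have := (it_mem h' hi' (n+i)).1.1
    rw [← abs_of_pos l0, ← abs_mul, abs_le]
    constructor <;> nlinarith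
  rw [dist_eq h hi h' hi' (n+i) hq]
  have q0 : 0 ≤ ((contQ n (fun i => pq x (i+1)) : ℝ) * ∏ j ∈ Finset.range i, L j) := by
    have : 0 ≤ ∏ j ∈ Finset.range i, L j :=
        Finset.prod_nonneg fun j hj => (hL j (by have := Finset.mem_range.1 hj; omega)).1.le
    positivity
  have p1 := prod_nonneg_it h hi (n+i)
  have p2 := prod_nonneg_it h' hi' (n+i)
  have := mul_le_one₀ (mul_le_one₀ b1 (by positivity) b2) (by positivity) e3
  refine le_trans (le_of_eq ?_) this
  ring

lemma tsum_pi_prod {α : Type*} (f : α → ENNReal) (n : ℕ) :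
    ∑' a : Fin n → α, ∏ j, f (a j) = (∑' x, f x) ^ n := by
  induction n with
  | zero => simp
  | succ n ih =>
    rw [← (Fin.consEquiv (fun _ : Fin (n+1) => α)).tsum_eq]
    rw [ENNReal.summable.tsum_prod' (fun _ => ENNReal.summable)]
    simp only [Fin.consEquiv, Equiv.coe_fn_mk, Fin.prod_univ_succ, Fin.cons_zero, Fin.cons_succ]
    simp_rw [ENNReal.tsum_mul_left]
    rw [ENNReal.tsum_mul_right, ih, pow_succ']

lemma press_bound (X : ℕ → ENNReal)
    (h : Filter.atTop.limsup (fun n : ℕ => (((n : ℝ)⁻¹ : ℝ) : EReal) * ENNReal.log (X n)) ≤ 0)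
    {ε : ℝ} (hε : 0 < ε) : ∀ᶠ n in atTop, X n ≤ ENNReal.ofReal (Real.exp (ε * n)) := by
  have h1 : Filter.atTop.limsup
      (fun n : ℕ => (((n : ℝ)⁻¹ : ℝ) : EReal) * ENNReal.log (X n)) < (ε : EReal) :=
    lt_of_le_of_lt h (by exact_mod_cast hε)
  filter_upwards [eventually_lt_of_limsup_lt h1, eventually_gt_atTop 0] with n hn hn0
  have hn0' : (0:ℝ) < n := by exact_mod_cast hn0
  have h2 : ENNReal.log (X n) ≤ ((ε * n : ℝ) : EReal) := by
    have h3 : ((n : ℝ) : EReal) * ((((n : ℝ)⁻¹ : ℝ) : EReal) * ENNReal.log (X n)) ≤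
        ((n : ℝ) : EReal) * (ε : EReal) :=
      mul_le_mul_of_nonneg_left hn.le (by exact_mod_cast hn0'.le)
    rw [← mul_assoc, ← EReal.coe_mul, mul_inv_cancel₀ hn0'.ne', EReal.coe_one, one_mul,
      ← EReal.coe_mul, mul_comm] at h3
    exact h3
  have h4 := EReal.exp_monotone h2
  rw [ENNReal.exp_log, EReal.exp_coe] at h4
  exact h4

lemma contQ_pos (n : ℕ) (a : Fin n → ℕ+) : (1:ℝ) ≤ (contQ n (fun i => (a i : ℕ)) : ℝ) := by
  have := contQ_ge' n (fun i => (a i : ℕ))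
  have h2 : 0 < ∏ j, (a j : ℕ) := Finset.prod_pos fun j _ => (a j).pos
  exact_mod_cast lt_of_lt_of_le h2 this

lemma gSet_nonempty {B₁ B₂ : ℝ} (h1 : 1 < B₁) (h2 : 1 ≤ B₂) : {s : ℝ | 0 ≤ s ∧
    Filter.atTop.limsup (fun n : ℕ =>
      (((n : ℝ)⁻¹ : ℝ) : EReal) * ENNReal.log (∑' a : Fin n → ℕ+,
        ENNReal.ofReal (B₂ ^ ((1 - s) * (n : ℝ)) *
          (B₁ ^ n * ((contQ n fun i => (a i : ℕ)) : ℝ) ^ 2) ^ (-s)))) ≤ 0}.Nonempty := by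
  have hsum : Summable (fun a : ℕ+ => ((a : ℕ) : ℝ)⁻¹ ^ 2) := by
    have : Summable (fun a : ℕ => (a : ℝ)⁻¹ ^ 2) := by
      simp [inv_pow]
    exact this.comp_injective PNat.coe_injective
  obtain ⟨k, hk⟩ := pow_unbounded_of_one_lt (∑' a : ℕ+, ((a : ℕ) : ℝ)⁻¹ ^ 2) h1
  have hB0 : 0 < B₁ := by linarith
  have hone : ∑' a : ℕ+, ENNReal.ofReal ((B₁ ^ (k+1))⁻¹ * ((a : ℕ) : ℝ)⁻¹ ^ 2) ≤ 1 := by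
    rw [← ENNReal.ofReal_tsum_of_nonneg (fun a => by positivity) (hsum.mul_left _), tsum_mul_left,
      ← ENNReal.ofReal_one]
    apply ENNReal.ofReal_le_ofReal
    rw [inv_mul_le_iff₀ (by positivity), mul_one]
    refine hk.le.trans ?_
    exact pow_le_pow_right₀ h1.le (by omega)
  refine ⟨(k+1 : ℕ), by positivity, ?_⟩
  refine Filter.limsup_le_of_le (by isBoundedDefault) (Eventually.of_forall fun n => ?_)
  have hX : (∑' a : Fin n → ℕ+,
        ENNReal.ofReal (B₂ ^ ((1 - ((k+1 : ℕ) : ℝ)) * (n : ℝ)) *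
          (B₁ ^ n * ((contQ n fun i => (a i : ℕ)) : ℝ) ^ 2) ^ (-((k+1 : ℕ) : ℝ)))) ≤ 1 := by
    calc _ ≤ ∑' a : Fin n → ℕ+, ∏ j, ENNReal.ofReal ((B₁ ^ (k+1))⁻¹ * ((a j : ℕ) : ℝ)⁻¹ ^ 2) := by
          refine ENNReal.tsum_le_tsum fun a => ?_
          rw [← ENNReal.ofReal_prod_of_nonneg (fun j _ => by positivity)]
          apply ENNReal.ofReal_le_ofReal
          have hq := contQ_pos n a
          have hq2 : (∏ j, ((a j : ℕ) : ℝ)) ≤ (contQ n fun i => (a i : ℕ) : ℝ) := by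
            exact_mod_cast contQ_ge' n (fun i => (a i : ℕ))
          have hp : 0 < ∏ j, ((a j : ℕ) : ℝ) :=
            Finset.prod_pos fun j _ => by exact_mod_cast (a j).pos
          set q := (contQ n fun i => (a i : ℕ) : ℝ)
          have e1 : B₂ ^ ((1 - ((k+1 : ℕ) : ℝ)) * (n : ℝ)) ≤ 1 := by
            apply Real.rpow_le_one_of_one_le_of_nonpos h2
            push_cast
            have : (0:ℝ) ≤ k * n := by positivity
            nlinarith
          rw [Real.rpow_neg (by positivity), Real.rpow_natCast]
          have e2 : ((B₁ ^ n * q ^ 2) ^ (k+1))⁻¹ ≤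
              ((B₁ ^ (k+1)) ^ n * (∏ j, ((a j : ℕ) : ℝ)) ^ 2)⁻¹ := by
            apply inv_anti₀ (by positivity)
            rw [mul_pow, ← pow_mul, ← pow_mul, mul_comm n (k+1)]
            gcongr
            calc (∏ j, ((a j : ℕ) : ℝ)) ^ 2 ≤ q ^ 2 := by gcongr
              _ ≤ (q ^ 2) ^ (k+1) := le_self_pow₀ (by nlinarith) (by omega)
          rw [Finset.prod_mul_distrib, Finset.prod_const, Finset.card_univ, Fintype.card_fin,
            Finset.prod_pow, Finset.prod_inv_distrib, inv_pow, inv_pow, ← mul_inv]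
          refine le_trans ?_ e2
          exact mul_le_of_le_one_left (by positivity) e1
      _ = _ := tsum_pi_prod (fun a : ℕ+ => ENNReal.ofReal ((B₁ ^ (k+1))⁻¹ * ((a : ℕ) : ℝ)⁻¹ ^ 2)) n
      _ ≤ 1 := pow_le_one₀ (by positivity) hone
  have hl : ENNReal.log (∑' a : Fin n → ℕ+,
        ENNReal.ofReal (B₂ ^ ((1 - ((k+1 : ℕ) : ℝ)) * (n : ℝ)) *
          (B₁ ^ n * ((contQ n fun i => (a i : ℕ)) : ℝ) ^ 2) ^ (-((k+1 : ℕ) : ℝ)))) ≤ 0 := by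
    rw [← ENNReal.log_one]
    exact ENNReal.log_monotone hX
  have h0 : (0 : EReal) ≤ (((n : ℝ)⁻¹ : ℝ) : EReal) := by
    exact_mod_cast (by positivity : (0:ℝ) ≤ (n:ℝ)⁻¹)
  calc _ ≤ (((n : ℝ)⁻¹ : ℝ) : EReal) * 0 := mul_le_mul_of_nonneg_left hl h0
    _ = 0 := mul_zero _

lemma term_compare {B₁ B₂ q s s' : ℝ} (h1 : 1 < B₁) (h2 : 1 ≤ B₂) (hq : 1 ≤ q) (hs : s < s') (n : ℕ) :
    B₂ ^ ((1 - s') * (n : ℝ)) * (B₁ ^ n * q ^ 2) ^ (-s') ≤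
    Real.exp (-((s' - s) * Real.log B₁ * n)) *
      (B₂ ^ ((1 - s) * (n : ℝ)) * (B₁ ^ n * q ^ 2) ^ (-s)) := by
  have hB0 : 0 < B₁ := by linarith
  have e1 : B₂ ^ ((1 - s') * (n : ℝ)) ≤ B₂ ^ ((1 - s) * (n : ℝ)) := by
    apply Real.rpow_le_rpow_of_exponent_le h2
    gcongr
  have e2 : (B₁ ^ n * q ^ 2) ^ (-s') = (B₁ ^ n * q ^ 2) ^ (-(s' - s)) * (B₁ ^ n * q ^ 2) ^ (-s) := by
    rw [← Real.rpow_add (by positivity)]; congr 1; ring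
  have e3 : (B₁ ^ n * q ^ 2) ^ (-(s' - s)) ≤ Real.exp (-((s' - s) * Real.log B₁ * n)) := by
    calc (B₁ ^ n * q ^ 2) ^ (-(s' - s)) ≤ (B₁ ^ n) ^ (-(s' - s)) := by
          apply Real.rpow_le_rpow_of_nonpos (by positivity) _ (by linarith)
          exact le_mul_of_one_le_right (by positivity) (by nlinarith)
      _ = _ := by
          rw [Real.rpow_def_of_pos (by positivity), Real.log_pow]
          congr 1; ring
  rw [e2]
  have : 0 ≤ (B₁ ^ n * q ^ 2) ^ (-s) := by positivity
  have hb : 0 ≤ B₂ ^ ((1 - s') * (n : ℝ)) := by positivity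
  calc _ = B₂ ^ ((1 - s') * (n : ℝ)) * (B₁ ^ n * q ^ 2) ^ (-(s' - s)) * (B₁ ^ n * q ^ 2) ^ (-s) := by ring
    _ ≤ B₂ ^ ((1 - s) * (n : ℝ)) * Real.exp (-((s' - s) * Real.log B₁ * n)) * (B₁ ^ n * q ^ 2) ^ (-s) := by gcongr
    _ = _ := by ring

/-- A piece of the cover. -/
def piece (A c : ℕ → ℝ) (i n : ℕ) (a : Fin n → ℕ+) (b : Fin i → ℕ) : Set ℝ :=
  {x | x ∈ Ioo (0:ℝ) 1 ∧ Irrational x ∧ (∀ j < i + 1, c j * A j ^ (n+1) ≤ (pq x (n + j + 1) : ℝ)) ∧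
    (∀ j : Fin n, pq x (j+1) = a j) ∧ ∀ j : Fin i, pq x (n + j + 1) = b j}

/-- The constant in the diameter bound. -/
noncomputable def kap (A c : ℕ → ℝ) (i : ℕ) : ℝ :=
  (∏ j ∈ Finset.range i, c j) ^ 2 * c i * (∏ j ∈ Finset.range i, A j) *
    (∏ j ∈ Finset.range (i+1), A j)

lemma ediam_piece (A c : ℕ → ℝ) (i n : ℕ) (hA : ∀ j < i + 1, 1 < A j) (hc : ∀ j < i + 1, 0 < c j)
    (a : Fin n → ℕ+) (b : Fin i → ℕ) :
    Metric.ediam (piece A c i n a b) ≤ ENNReal.ofReal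
      ((kap A c i * ((∏ j ∈ Finset.range i, A j) ^ n * ((∏ j ∈ Finset.range (i+1), A j) ^ n *
        (contQ n (fun i => (a i : ℕ)) : ℝ) ^ 2)))⁻¹) := by
  apply Metric.ediam_le_of_forall_dist_le
  rintro x ⟨h, hi, hx, hxa, hxb⟩ y ⟨h', hi', hy, hya, hyb⟩
  have hq : ∀ j < n + i, pq x (j+1) = pq y (j+1) := by
    intro j hj
    rcases lt_or_ge j n with h | h
    · exact (hxa ⟨j, h⟩).trans (hya ⟨j, h⟩).symm
    · obtain ⟨l, rfl⟩ := Nat.exists_eq_add_of_le h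
      exact (hxb ⟨l, by omega⟩).trans (hyb ⟨l, by omega⟩).symm
  have key := dist_bound h hi h' hi' n i (fun j => c j * A j ^ (n+1)) hq (fun j hj =>
    ⟨mul_pos (hc j hj) (pow_pos (by linarith [hA j hj]) _), hx j hj, hy j hj⟩)
  have hcq : contQ n (fun i => pq x (i+1)) = contQ n (fun i => (a i : ℕ)) := by
    congr 1; funext j; exact hxa j
  rw [hcq] at key
  have hq1 := contQ_pos n a
  have pA : 0 < ∏ j ∈ Finset.range i, A j :=
    Finset.prod_pos fun j hj => by have := hA j (by have := Finset.mem_range.1 hj; omega); linarith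
  have pA' : 0 < ∏ j ∈ Finset.range (i+1), A j :=
    Finset.prod_pos fun j hj => by have := hA j (by have := Finset.mem_range.1 hj; omega); linarith
  have pc : 0 < ∏ j ∈ Finset.range i, c j :=
    Finset.prod_pos fun j hj => hc j (by have := Finset.mem_range.1 hj; omega)
  have pci := hc i (by omega)
  have hk : 0 < kap A c i := by unfold kap; positivity
  rw [Real.dist_eq, ← one_div, le_div_iff₀ (by positivity)]
  refine le_trans (le_of_eq ?_) key
  rw [Finset.prod_mul_distrib, Finset.prod_pow, kap, Finset.prod_range_succ]
  ring

lemma card_bound (A c : ℕ → ℝ) (i n : ℕ) (hA : ∀ j < i + 1, 1 < A j)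
    (hc : ∀ j < i + 1, 0 < c j) :
    (Fintype.card ((j : Fin i) → Fin ⌈2 * (c j * A j ^ (n+1))⌉₊) : ℝ) ≤
      (∏ j ∈ Finset.range i, (2 * c j + 1)) * (∏ j ∈ Finset.range i, A j) ^ (n+1) := by
  rw [Fintype.card_pi]
  simp only [Fintype.card_fin]
  rw [← Finset.prod_pow, ← Finset.prod_mul_distrib, Finset.prod_range, Nat.cast_prod]
  refine Finset.prod_le_prod (fun j _ => by positivity) (fun j _ => ?_)
  have h1 := hA j (by omega)
  have h2 := hc j (by omega)
  have h3 : 1 ≤ A j ^ (n+1) := one_le_pow₀ h1.le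
  have := Nat.ceil_lt_add_one (a := 2 * (c j * A j ^ (n+1))) (by positivity)
  nlinarith

lemma piece_sum (A c : ℕ → ℝ) (i n : ℕ) (hA : ∀ j < i + 1, 1 < A j) (hc : ∀ j < i + 1, 0 < c j)
    {s s' : ℝ} (hs' : 0 < s') (hs : s < s') (a : Fin n → ℕ+) :
    ∑' b : (j : Fin i) → Fin ⌈2 * (c j * A j ^ (n+1))⌉₊,
      Metric.ediam (piece A c i n a (fun j => (b j : ℕ))) ^ s' ≤
    ENNReal.ofReal ((∏ j ∈ Finset.range i, (2 * c j + 1)) * (∏ j ∈ Finset.range i, A j) *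
        kap A c i ^ (-s')) *
    (ENNReal.ofReal (Real.exp (-((s' - s) * Real.log (∏ j ∈ Finset.range (i+1), A j) * n))) *
    ENNReal.ofReal ((∏ j ∈ Finset.range i, A j) ^ ((1 - s) * (n : ℝ)) *
      ((∏ j ∈ Finset.range (i+1), A j) ^ n * ((contQ n fun i => (a i : ℕ)) : ℝ) ^ 2) ^ (-s))) := by
  have aux : ∀ k ≤ i + 1, 1 ≤ ∏ j ∈ Finset.range k, A j := by
    intro k hk
    induction k with
    | zero => simp
    | succ k ih =>
      rw [Finset.prod_range_succ]
      exact one_le_mul_of_one_le_of_one_le (ih (by omega)) (hA k (by omega)).le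
  have pA := aux i (by omega)
  have pA' : 1 < ∏ j ∈ Finset.range (i+1), A j := by
    rw [Finset.prod_range_succ]
    have := hA i (by omega)
    nlinarith
  have pc : 0 < ∏ j ∈ Finset.range i, c j :=
    Finset.prod_pos fun j hj => hc j (by have := Finset.mem_range.1 hj; omega)
  have pc2 : 0 < ∏ j ∈ Finset.range i, (2 * c j + 1) :=
    Finset.prod_pos fun j hj => by
      have := hc j (by have := Finset.mem_range.1 hj; omega); linarith
  have pci := hc i (by omega)
  have hk : 0 < kap A c i := by unfold kap; positivity
  have hcard := card_bound A c i n hA hc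
  have hd := ediam_piece A c i n hA hc a
  have hq := contQ_pos n a
  have hcmp := term_compare pA' pA hq hs n
  set q := (contQ n (fun i => (a i : ℕ)) : ℝ)
  set κ := kap A c i
  set B₂ := ∏ j ∈ Finset.range i, A j
  set B₁ := ∏ j ∈ Finset.range (i+1), A j
  set K := ∏ j ∈ Finset.range i, (2 * c j + 1)
  have hB₂ : 0 < B₂ := by linarith
  have hB₁ : 0 < B₁ := by linarith
  rw [tsum_fintype]
  refine (Finset.sum_le_card_nsmul _ _ (ENNReal.ofReal ((κ * (B₂ ^ n * (B₁ ^ n * q ^ 2)))⁻¹ ^ s'))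
    (fun b _ => ?_)).trans ?_
  · rw [← ENNReal.ofReal_rpow_of_nonneg (by positivity) hs'.le]
    exact ENNReal.rpow_le_rpow (hd _) hs'.le
  rw [nsmul_eq_mul, Finset.card_univ, ← ENNReal.ofReal_natCast,
    ← ENNReal.ofReal_mul (by positivity), ← ENNReal.ofReal_mul (by positivity),
    ← ENNReal.ofReal_mul (by positivity)]
  apply ENNReal.ofReal_le_ofReal
  have e : (κ * (B₂ ^ n * (B₁ ^ n * q ^ 2)))⁻¹ ^ s' =
      κ ^ (-s') * (B₂ ^ (-s' * n) * (B₁ ^ n * q ^ 2) ^ (-s')) := by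
    rw [Real.inv_rpow (by positivity), ← Real.rpow_neg (by positivity),
      Real.mul_rpow (by positivity) (by positivity), Real.mul_rpow (by positivity) (by positivity),
      ← Real.rpow_natCast B₂ n, ← Real.rpow_mul hB₂.le, mul_comm (n : ℝ) (-s')]
  have e2 : B₂ ^ (n+1) * B₂ ^ (-s' * n) = B₂ * B₂ ^ ((1 - s') * n) := by
    rw [pow_succ', mul_assoc, ← Real.rpow_natCast B₂ n, ← Real.rpow_add hB₂]
    congr 2; ring
  calc _ ≤ (K * B₂ ^ (n+1)) * (κ * (B₂ ^ n * (B₁ ^ n * q ^ 2)))⁻¹ ^ s' := by gcongr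
    _ = K * κ ^ (-s') * (B₂ ^ (n+1) * B₂ ^ (-s' * n)) * (B₁ ^ n * q ^ 2) ^ (-s') := by rw [e]; ring
    _ = (K * B₂ * κ ^ (-s')) * (B₂ ^ ((1 - s') * (n : ℝ)) * (B₁ ^ n * q ^ 2) ^ (-s')) := by
      rw [e2]; ring
    _ ≤ _ := by gcongr

lemma dimH_le_dimNum (m : ℕ) (A c : ℕ → ℝ)
    (hA : ∀ i < m, 1 < A i) (hc : ∀ i < m, 0 < c i) (i : ℕ) (him : i < m) :
    dimH {x : ℝ | x ∈ Set.Ioo (0 : ℝ) 1 ∧ Irrational x ∧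
      {n : ℕ | ∀ i < m, c i * A i ^ n ≤ (pq x (n + i) : ℝ) ∧
        (pq x (n + i) : ℝ) < 2 * (c i * A i ^ n)}.Infinite} ≤
    ENNReal.ofReal (gExp (∏ j ∈ Finset.range (i+1), A j) (∏ j ∈ Finset.range i, A j)) := by
  have hA' : ∀ j < i + 1, 1 < A j := fun j hj => hA j (by omega)
  have hc' : ∀ j < i + 1, 0 < c j := fun j hj => hc j (by omega)
  have aux : ∀ k ≤ i + 1, 1 ≤ ∏ j ∈ Finset.range k, A j := by
    intro k hk
    induction k with
    | zero => simp
    | succ k ih =>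
      rw [Finset.prod_range_succ]
      exact one_le_mul_of_one_le_of_one_le (ih (by omega)) (hA' k (by omega)).le
  have pA := aux i (by omega)
  have pA' : 1 < ∏ j ∈ Finset.range (i+1), A j := by
    rw [Finset.prod_range_succ]
    have := hA' i (by omega)
    nlinarith
  have pc : 0 < ∏ j ∈ Finset.range i, c j :=
    Finset.prod_pos fun j hj => hc' j (by have := Finset.mem_range.1 hj; omega)
  have pci := hc' i (by omega)
  have hk : 0 < kap A c i := by
    unfold kap
    have : 0 < ∏ j ∈ Finset.range i, A j := by linarith
    have : 0 < ∏ j ∈ Finset.range (i+1), A j := by linarith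
    positivity
  by_contra hcon
  obtain ⟨r, hr1, hr2⟩ := ENNReal.lt_iff_exists_nnreal_btwn.1 (not_le.1 hcon)
  refine absurd hr2 (not_lt.2 (dimH_le_of_hausdorffMeasure_ne_top ?_))
  have hr0 : (0:ℝ) < r := by
    have : (0:ENNReal) < r := lt_of_le_of_lt (by positivity) hr1
    exact_mod_cast this
  have hgr : gExp (∏ j ∈ Finset.range (i+1), A j) (∏ j ∈ Finset.range i, A j) < r := by
    rw [← ENNReal.ofReal_coe_nnreal] at hr1
    exact (ENNReal.ofReal_lt_ofReal_iff hr0).1 hr1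
  obtain ⟨s, ⟨_, hsl⟩, hsr⟩ := exists_lt_of_csInf_lt (gSet_nonempty pA' pA) hgr
  set B₂ := ∏ j ∈ Finset.range i, A j with hB₂def
  set B₁ := ∏ j ∈ Finset.range (i+1), A j with hB₁def
  have hlog : 0 < Real.log B₁ := Real.log_pos pA'
  set ε : ℝ := ((r:ℝ) - s) * Real.log B₁ / 2 with hε
  have hεp : 0 < ε := by
    have : 0 < (r:ℝ) - s := by linarith
    positivity
  obtain ⟨N0, hN0⟩ := eventually_atTop.1 (press_bound _ hsl hεp)
  let ι := Σ n : ℕ, (Fin n → ℕ+) × ((j : Fin i) → Fin ⌈2 * (c j * A j ^ (n+1))⌉₊)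
  let t : ℕ → ι → Set ℝ := fun N p =>
    if N0 + N ≤ p.1 then piece A c i p.1 p.2.1 (fun j => (p.2.2 j : ℕ)) else ∅
  let C := ENNReal.ofReal ((∏ j ∈ Finset.range i, (2 * c j + 1)) * B₂ * kap A c i ^ (-(r:ℝ)))
  have htot : ∀ N, ∑' p : ι, Metric.ediam (t N p) ^ (r:ℝ) ≤
      ∑' n : ℕ, C * ENNReal.ofReal (Real.exp (-ε)) ^ n := by
    intro N
    rw [ENNReal.tsum_sigma']
    refine ENNReal.tsum_le_tsum fun n => ?_
    by_cases hn : N0 + N ≤ n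
    · simp only [t, if_pos hn]
      rw [ENNReal.summable.tsum_prod' (fun _ => ENNReal.summable)]
      refine (ENNReal.tsum_le_tsum fun a => piece_sum A c i n hA' hc' hr0 hsr a).trans ?_
      rw [ENNReal.tsum_mul_left, ENNReal.tsum_mul_left]
      refine mul_le_mul_right ?_ _
      refine (mul_le_mul_right (hN0 n (by omega)) _).trans ?_
      rw [← ENNReal.ofReal_mul (by positivity), ← ENNReal.ofReal_pow (by positivity),
        ← Real.exp_add, ← Real.exp_nat_mul]
      apply ENNReal.ofReal_le_ofReal
      apply le_of_eq
      congr 1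
      rw [hε]; ring
    · simp only [t, if_neg hn]
      simp [hr0]
  have hfin : ∑' n : ℕ, C * ENNReal.ofReal (Real.exp (-ε)) ^ n < ⊤ := by
    rw [ENNReal.tsum_mul_left]
    refine ENNReal.mul_lt_top ENNReal.ofReal_lt_top (tsum_geometric_lt_top.2 ?_)
    rw [ENNReal.ofReal_lt_one]
    exact (by rw [← Real.exp_zero]; exact Real.exp_lt_exp.2 (by linarith))
  refine ne_top_of_le_ne_top hfin.ne ?_
  have hrt : Tendsto (fun N : ℕ => ENNReal.ofReal ((kap A c i)⁻¹ * B₁⁻¹ ^ N)) atTop (nhds 0) := by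
    rw [← ENNReal.ofReal_zero]
    apply ENNReal.tendsto_ofReal
    rw [← mul_zero (kap A c i)⁻¹]
    exact (tendsto_pow_atTop_nhds_zero_of_lt_one (by positivity) (inv_lt_one_of_one_lt₀ pA')).const_mul _
  refine (Measure.hausdorffMeasure_le_liminf_tsum (r:ℝ) _ (l := atTop) _ hrt t
    (Eventually.of_forall ?_) (Eventually.of_forall ?_)).trans ?_
  · rintro N ⟨n, a, b⟩
    by_cases hn : N0 + N ≤ n
    · simp only [t, if_pos hn]
      refine (ediam_piece A c i n hA' hc' a _).trans (ENNReal.ofReal_le_ofReal ?_)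
      have hq := contQ_pos n a
      rw [inv_pow, ← mul_inv]
      apply inv_anti₀ (by positivity)
      have h1 : B₁ ^ N ≤ B₁ ^ n := pow_le_pow_right₀ pA'.le (by omega)
      have h2 : 1 ≤ B₂ ^ n := one_le_pow₀ pA
      have h3 : 1 ≤ (contQ n (fun i => (a i : ℕ)) : ℝ) ^ 2 := one_le_pow₀ hq
      have h4 : 0 ≤ B₁ ^ n := by positivity
      gcongr
      calc B₁ ^ N ≤ B₁ ^ n := h1
        _ ≤ B₁ ^ n * (contQ n (fun i => (a i : ℕ)) : ℝ) ^ 2 := le_mul_of_one_le_right h4 h3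
        _ ≤ _ := le_mul_of_one_le_left (by positivity) h2
    · simp only [t, if_neg hn]
      simp
  · rintro N x ⟨hx, hirr, hinf⟩
    obtain ⟨k, hk1, hk2⟩ := hinf.exists_gt (N0 + N)
    obtain ⟨n, rfl⟩ : ∃ n, k = n + 1 := ⟨k - 1, by omega⟩
    have hk1' : ∀ j < i + 1, c j * A j ^ (n+1) ≤ (pq x (n + j + 1) : ℝ) ∧
        (pq x (n + j + 1) : ℝ) < 2 * (c j * A j ^ (n+1)) := by
      intro j hj
      have := hk1 j (by omega)
      rwa [show n + 1 + j = n + j + 1 by omega] at this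
    rw [mem_iUnion]
    refine ⟨⟨n, fun j => ⟨pq x (j+1), pq_pos hx hirr j⟩, fun j => ⟨pq x (n + j + 1), ?_⟩⟩, ?_⟩
    · rw [Nat.lt_ceil]
      exact (hk1' j (by omega)).2
    · simp only [t, if_pos (show N0 + N ≤ n by omega)]
      exact ⟨hx, hirr, fun j hj => (hk1' j hj).1, fun j => rfl, fun j => rfl⟩
  · refine (liminf_le_liminf (Eventually.of_forall htot)).trans ?_
    rw [liminf_const]

lemma dimNum_eq (A : ℕ → ℝ) (i : ℕ) :
    dimNum A i = gExp (∏ j ∈ Finset.range (i+1), A j) (∏ j ∈ Finset.range i, A j) := by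
  unfold dimNum
  split_ifs with h
  · subst h
    simp [sExp, gExp, betaProd]
  · rw [betaProd, betaProd, Nat.sub_add_cancel (by omega)]

theorem hausdorff_dim_Sm_upper (m : ℕ) (hm : 1 ≤ m) (A c : ℕ → ℝ)
    (hA : ∀ i < m, 1 < A i) (hc : ∀ i < m, 0 < c i) :
    dimH {x : ℝ | x ∈ Set.Ioo (0 : ℝ) 1 ∧ Irrational x ∧
      {n : ℕ | ∀ i < m, c i * A i ^ n ≤ (pq x (n + i) : ℝ) ∧
        (pq x (n + i) : ℝ) < 2 * (c i * A i ^ n)}.Infinite} ≤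
    ENNReal.ofReal
      ((Finset.range m).inf' (Finset.nonempty_range_iff.mpr (by omega)) (dimNum A)) := by
  obtain ⟨i, hi, he⟩ := Finset.exists_mem_eq_inf' (s := Finset.range m)
    (Finset.nonempty_range_iff.mpr (by omega)) (dimNum A)
  rw [he, dimNum_eq]
  exact dimH_le_dimNum m A c hA hc i (Finset.mem_range.1 hi)
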